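/- Let P be a finite simple graph and let S be an independent set of non-isolated vertices of P such that (i) |S| − |N(S)| ≥ |S'| − |N(S')| (as integers) for every independent set S' of non-isolated vertices of P, and (ii) |S| ≥ |S'| for every independent set S' of non-isolated vertices achieving |S'| − |N(S')| = |S| − |N(S)|. Let R = V(P) \ N[S] and assume that every vertex of R has at least one neighbor in R. Then: (1) there exists a partition of R into blocks, each of which is either a two-element set of adjacent vertices or a set of odd cardinality at least 3 on which the induced subgraph of P contains a Hamiltonian cycle; and (2) for every vertex x ∈ R, such a partition also exists for R \ {x}. -/

import Mathlib

open Finset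

/-- A partition of the finset `R` into blocks, each of which is either a pair of adjacent
vertices or an odd-size block of size at least 3 whose induced subgraph has a Hamiltonian
cycle. This encodes a spanning subgraph of `P[R]` that is a disjoint union of edges and
odd cycles. -/
def EdgeOddCyclePartition {V : Type*} [Fintype V] [DecidableEq V]
    (P : SimpleGraph V) (R : Finset V) (Part : Finset (Finset V)) : Prop :=
  (∀ B ∈ Part, B ⊆ R) ∧
  (∀ v ∈ R, ∃! B, B ∈ Part ∧ v ∈ B) ∧
  (∀ B ∈ Part, (∃ a b, P.Adj a b ∧ B = {a, b}) ∨
    (3 ≤ B.card ∧ Odd B.card ∧ (P.induce (B : Set V)).IsHamiltonian))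

/-
Let `T` be a nonempty independent subset of `R`. Then `S ∪ T` is independent, and passing to it from
`S` adds `|T|` vertices to the set and the `|N(T) ∩ R|` vertices of `N(T) ∩ R` to its neighborhood;
the extremality of `S` therefore forces `|T| < |N(T) ∩ R|`. So `|T| ≤ |N(T) ∩ R'|` still holds for
`R' = R \ {x}`, and by Hall's theorem there is a permutation of `R'` sending each vertex to a
neighbor. Its cycles of odd length are odd cycles of the graph, and those of even length, among them
the transpositions, split into alternate edges.
-/

section Neighborhood

lemma isIndepSet_iff_forall_not_adj {V : Type*} {P : SimpleGraph V} {s : Set V} :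
    P.IsIndepSet s ↔ ∀ u ∈ s, ∀ v ∈ s, ¬P.Adj u v :=
  ⟨fun h _ hu _ hv huv ↦ h hu hv huv.ne huv, fun h _ hu _ hv _ ↦ h _ hu _ hv⟩

variable {V : Type*} [DecidableEq V] {P : SimpleGraph V} [P.LocallyFinite] {S T : Finset V} {v : V}

variable (P T) in
/-- The open neighborhood `N(T)` of a finite set `T` of vertices; it may meet `T` if `T` is not
independent. -/
def nbhd : Finset V := T.biUnion fun s ↦ P.neighborFinset s

lemma mem_nbhd : v ∈ nbhd P T ↔ ∃ u ∈ T, P.Adj u v := by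
  simp only [nbhd, mem_biUnion, SimpleGraph.mem_neighborFinset]

lemma nbhd_mono (h : S ⊆ T) : nbhd P S ⊆ nbhd P T := biUnion_subset_biUnion_of_subset_left _ h

lemma nbhd_union : nbhd P (S ∪ T) = nbhd P S ∪ nbhd P T := union_biUnion

lemma disjoint_nbhd_left : Disjoint (nbhd P S) T ↔ Disjoint S (nbhd P T) := by
  simp only [disjoint_left, mem_nbhd]
  grind [SimpleGraph.adj_comm]

lemma isIndepSet_iff_disjoint_nbhd : P.IsIndepSet T ↔ Disjoint T (nbhd P T) := by
  simp only [isIndepSet_iff_forall_not_adj, disjoint_left, mem_nbhd]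
  grind

end Neighborhood

section CriticalSet

variable {V : Type*} [DecidableEq V] {P : SimpleGraph V}

variable (P) in
/-- The independent sets of non-isolated vertices, over which `|S| − |N(S)|` is maximized. -/
structure IsNonisolatedIndepSet (S : Finset V) : Prop where
  isIndepSet : P.IsIndepSet (S : Set V)
  exists_adj : ∀ v ∈ S, ∃ w, P.Adj v w

variable (P) in
/-- `S` maximizes `|S| − |N(S)|` among the independent sets of non-isolated vertices, and
has maximum cardinality among the maximizers. -/
structure IsMaximumCritical [P.LocallyFinite] (S : Finset V) : Prop extends
    IsNonisolatedIndepSet P S where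
  card_sub_le {T : Finset V} : IsNonisolatedIndepSet P T →
    (#T : ℤ) - #(nbhd P T) ≤ #S - #(nbhd P S)
  card_le {T : Finset V} : IsNonisolatedIndepSet P T →
    (#T : ℤ) - #(nbhd P T) = #S - #(nbhd P S) → #T ≤ #S

variable [P.LocallyFinite] {S T : Finset V}

lemma IsNonisolatedIndepSet.union (hS : IsNonisolatedIndepSet P S)
    (hT : IsNonisolatedIndepSet P T) (hST : Disjoint T (nbhd P S)) :
    IsNonisolatedIndepSet P (S ∪ T) where
  isIndepSet := by
    have hTS : Disjoint S (nbhd P T) := disjoint_nbhd_left.1 hST.symm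
    rw [isIndepSet_iff_disjoint_nbhd, nbhd_union, disjoint_union_left, disjoint_union_right,
      disjoint_union_right, ← isIndepSet_iff_disjoint_nbhd, ← isIndepSet_iff_disjoint_nbhd]
    exact ⟨⟨hS.isIndepSet, hTS⟩, hST, hT.isIndepSet⟩
  exists_adj v hv := (mem_union.1 hv).elim (hS.exists_adj v) (hT.exists_adj v)

lemma IsMaximumCritical.card_lt_card_nbhd_sdiff (hS : IsMaximumCritical P S)
    (hT : IsNonisolatedIndepSet P T) (hne : T.Nonempty) (hTS : Disjoint T (S ∪ nbhd P S)) :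
    #T < #(nbhd P T \ (S ∪ nbhd P S)) := by
  obtain ⟨hdisj, hnbhd⟩ := disjoint_union_right.1 hTS
  have hST : IsNonisolatedIndepSet P (S ∪ T) := hS.toIsNonisolatedIndepSet.union hT hnbhd
  have hcard : #(S ∪ T) = #S + #T := card_union_of_disjoint hdisj.symm
  have hcardN : #(nbhd P (S ∪ T)) = #(nbhd P S) + #(nbhd P T \ (S ∪ nbhd P S)) := by
    have hNS : nbhd P T \ S = nbhd P T := sdiff_eq_self_of_disjoint (disjoint_nbhd_left.2 hnbhd)
    rw [nbhd_union, ← union_sdiff_self_eq_union, card_union_of_disjoint disjoint_sdiff,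
      ← sup_eq_union, ← sdiff_sdiff_left, hNS]
  by_contra! hle
  have hge : (#S : ℤ) - #(nbhd P S) ≤ #(S ∪ T) - #(nbhd P (S ∪ T)) := by lia
  have hmax : #(S ∪ T) ≤ #S := hS.card_le hST ((hS.card_sub_le hST).antisymm hge)
  have hpos : 0 < #T := hne.card_pos
  lia

end CriticalSet

section Hall

lemma exists_perm_forall_mem_of_card_le {α : Type*} [DecidableEq α] {t : α → Finset α}
    {R : Finset α} (h : ∀ T ⊆ R, #T ≤ #(T.biUnion t ∩ R)) :
    ∃ σ : Equiv.Perm α, (∀ v ∉ R, σ v = v) ∧ ∀ v ∈ R, σ v ∈ t v := by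
  have hall (A : Finset R) : #A ≤ #(A.biUnion fun v ↦ t v ∩ R) := by
    have := h (A.map (.subtype _)) (map_subtype_subset A)
    rwa [card_map, map_eq_image, image_biUnion, biUnion_inter] at this
  obtain ⟨f, hf, hft⟩ := (all_card_le_biUnion_card_iff_exists_injective _).1 hall
  simp only [mem_inter] at hft
  let g : R → R := fun v ↦ ⟨f v, (hft v).2⟩
  have hg : g.Bijective := Finite.injective_iff_bijective.1 fun u v huv ↦
    hf (congrArg Subtype.val huv)
  refine ⟨.ofSubtype (.ofBijective g hg),
    fun v hv ↦ Equiv.Perm.ofSubtype_apply_of_not_mem _ hv, fun v hv ↦ ?_⟩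
  rw [Equiv.Perm.ofSubtype_apply_of_mem _ hv]
  exact (hft ⟨v, hv⟩).1

end Hall

section Hamiltonian

lemma isHamiltonian_cycleGraph (n : ℕ) : (SimpleGraph.cycleGraph (n + 3)).IsHamiltonian := fun _ ↦
  ⟨0, SimpleGraph.cycleGraph.cycle n,
    SimpleGraph.Walk.isHamiltonianCycle_iff_isCycle_and_length_eq.2
      ⟨SimpleGraph.cycleGraph.isCycle_cycle, by simp [SimpleGraph.cycleGraph.length_cycle]⟩⟩

lemma isHamiltonian_of_bijective_hom {α β : Type*} [Fintype α] [DecidableEq α] [Fintype β]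
    [DecidableEq β] {G : SimpleGraph α} {H : SimpleGraph β} (hG : G.IsHamiltonian) (f : G →g H)
    (hf : Function.Bijective f) : H.IsHamiltonian := fun hcard ↦
  have ⟨a, p, hp⟩ := hG (Fintype.card_of_bijective hf ▸ hcard)
  ⟨f a, p.map f, hp.map hf⟩

lemma isHamiltonian_induce_support {V : Type*} [Fintype V] [DecidableEq V] {P : SimpleGraph V}
    {c : Equiv.Perm V} (hc : c.IsCycle) (hcard : 3 ≤ #c.support)
    (hadj : ∀ v ∈ c.support, P.Adj v (c v)) :
    (P.induce (c.support : Set V)).IsHamiltonian := by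
  obtain ⟨n, hn⟩ : ∃ n, #c.support = n + 3 := ⟨#c.support - 3, by lia⟩
  have hord : orderOf c = n + 3 := hc.orderOf.trans hn
  obtain ⟨x, hx⟩ := hc.nonempty_support
  have hpow (i : ℕ) : (c ^ i) x ∈ c.support := Equiv.Perm.pow_apply_mem_support.2 hx
  have hsucc (i : Fin (n + 3)) : P.Adj ((c ^ i.val) x) ((c ^ (i + 1).val) x) := by
    have : c ^ (i + 1).val = c * c ^ i.val := by
      rw [Fin.val_add, Fin.val_one, ← pow_succ', pow_eq_pow_iff_modEq, hord, Nat.ModEq, Nat.mod_mod]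
    exact this ▸ hadj _ (hpow i)
  let f : SimpleGraph.cycleGraph (n + 3) →g P.induce (c.support : Set V) :=
    { toFun i := ⟨(c ^ i.val) x, hpow i⟩
      map_rel' {u v} huv := by
        rcases SimpleGraph.cycleGraph_adj.1 huv with h | h
        · exact (eq_add_of_sub_eq' h ▸ hsucc v).symm
        · exact eq_add_of_sub_eq' h ▸ hsucc u }
  have hf : Function.Surjective f := by
    rintro ⟨v, hv⟩
    rw [mem_coe, Equiv.Perm.mem_support] at hv
    obtain ⟨i, hi, rfl⟩ := (hc.sameCycle (Equiv.Perm.mem_support.1 hx) hv).exists_pow_eq'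
    exact ⟨⟨i, hord ▸ hi⟩, rfl⟩
  have hcardf : Fintype.card (Fin (n + 3)) = Fintype.card (c.support : Set V) :=
    (Fintype.card_fin _).trans (hn.symm.trans (Fintype.card_coe _).symm)
  exact isHamiltonian_of_bijective_hom (isHamiltonian_cycleGraph n) f
    ((Fintype.bijective_iff_surjective_and_card f).2 ⟨hf, hcardf⟩)

end Hamiltonian

namespace EdgeOddCyclePartition

variable {V : Type*} [Fintype V] [DecidableEq V] {P : SimpleGraph V}

lemma empty : EdgeOddCyclePartition P ∅ ∅ := by
  simp [EdgeOddCyclePartition]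

lemma singleton {B : Finset V} (hB : (∃ a b, P.Adj a b ∧ B = {a, b}) ∨
    (3 ≤ #B ∧ Odd #B ∧ (P.induce (B : Set V)).IsHamiltonian)) :
    EdgeOddCyclePartition P B {B} :=
  ⟨by simp, fun v hv ↦ ⟨B, by simp [hv], by simp⟩, by simpa using hB⟩

lemma union {A B : Finset V} {Q Q' : Finset (Finset V)} (hQ : EdgeOddCyclePartition P A Q)
    (hQ' : EdgeOddCyclePartition P B Q') (hAB : Disjoint A B) :
    EdgeOddCyclePartition P (A ∪ B) (Q ∪ Q') := by
  obtain ⟨hsub, huniq, hblock⟩ := hQ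
  obtain ⟨hsub', huniq', hblock'⟩ := hQ'
  have := disjoint_left.1 hAB
  refine ⟨by grind, fun v hv ↦ ?_, by grind⟩
  rcases mem_union.1 hv with hv | hv
  · obtain ⟨C, hC, hCuniq⟩ := huniq v hv
    exact ⟨C, by grind, by grind⟩
  · obtain ⟨C, hC, hCuniq⟩ := huniq' v hv
    exact ⟨C, by grind, by grind⟩

lemma exists_biUnion {ι : Type*} {s : Finset ι} {A : ι → Finset V}
    (hdisj : (s : Set ι).PairwiseDisjoint A)
    (hA : ∀ i ∈ s, ∃ Q, EdgeOddCyclePartition P (A i) Q) :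
    ∃ Q, EdgeOddCyclePartition P (s.biUnion A) Q := by
  classical
  induction s using Finset.induction_on with
  | empty => exact ⟨∅, empty⟩
  | insert i s his ih =>
    rw [forall_mem_insert] at hA
    rw [coe_insert, Set.pairwiseDisjoint_insert_of_notMem (mod_cast his)] at hdisj
    obtain ⟨Q, hQ⟩ := hA.1
    obtain ⟨Q', hQ'⟩ := ih hdisj.1 hA.2
    exact ⟨Q ∪ Q', biUnion_insert (t := A) ▸
      hQ.union hQ' ((disjoint_biUnion_right _ _ _).2 hdisj.2)⟩

lemma exists_of_isChain_of_even {l : List V} (hnodup : l.Nodup) (hchain : l.IsChain P.Adj)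
    (heven : Even l.length) : ∃ Q, EdgeOddCyclePartition P l.toFinset Q := by
  induction l using List.twoStepInduction with
  | nil => exact ⟨∅, empty⟩
  | singleton a => simp at heven
  | cons_cons a b l ih =>
    obtain ⟨Q, hQ⟩ := ih hnodup.of_cons.of_cons hchain.tail.tail
      (by simpa [Nat.even_add_one] using heven)
    have hab : P.Adj a b := (List.isChain_cons_cons.1 hchain).1
    have hdisj : Disjoint {a, b} l.toFinset := by
      simp_all
    refine ⟨{{a, b}} ∪ Q, ?_⟩
    simpa [insert_union] using (singleton (.inl ⟨a, b, hab, rfl⟩)).union hQ hdisj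

lemma exists_of_isCycle {c : Equiv.Perm V} (hc : c.IsCycle)
    (hadj : ∀ v ∈ c.support, P.Adj v (c v)) : ∃ Q, EdgeOddCyclePartition P c.support Q := by
  rcases Nat.even_or_odd #c.support with heven | hodd
  · obtain ⟨x, hx⟩ := hc.nonempty_support
    have hsupp : (c.toList x).toFinset = c.support := by
      ext v
      rw [List.mem_toFinset, Equiv.Perm.mem_toList_iff, ← Equiv.Perm.mem_support_cycleOf_iff,
        hc.cycleOf_eq (Equiv.Perm.mem_support.1 hx)]
    have hlen : (c.toList x).length = #c.support := by
      rw [← hsupp, List.toFinset_card_of_nodup (c.nodup_toList x)]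
    have hchain : (c.toList x).IsChain P.Adj := List.isChain_iff_getElem.2 fun i hi ↦ by
      rw [Equiv.Perm.getElem_toList, Equiv.Perm.getElem_toList, pow_succ', Equiv.Perm.mul_apply]
      exact hadj _ (Equiv.Perm.pow_apply_mem_support.2 hx)
    exact hsupp ▸ exists_of_isChain_of_even (c.nodup_toList x) hchain (hlen ▸ heven)
  · have hcard : 3 ≤ #c.support := by
      have := hc.two_le_card_support
      grind
    exact ⟨_, singleton (.inr ⟨hcard, hodd, isHamiltonian_induce_support hc hcard hadj⟩)⟩

lemma exists_support {σ : Equiv.Perm V} (hσ : ∀ v ∈ σ.support, P.Adj v (σ v)) :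
    ∃ Q, EdgeOddCyclePartition P σ.support Q := by
  have hcycles : σ.support = σ.cycleFactorsFinset.biUnion Equiv.Perm.support := by
    ext v
    rw [mem_biUnion, Equiv.Perm.mem_support_iff_mem_support_of_mem_cycleFactorsFinset]
  rw [hcycles]
  refine exists_biUnion (fun c hc d hd hcd ↦
    (σ.cycleFactorsFinset_pairwise_disjoint hc hd hcd).disjoint_support) fun c hc ↦ ?_
  obtain ⟨hcycle, hcσ⟩ := Equiv.Perm.mem_cycleFactorsFinset_iff.1 hc
  exact exists_of_isCycle hcycle fun v hv ↦
    hcσ v hv ▸ hσ v (Equiv.Perm.mem_cycleFactorsFinset_support_le hc hv)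

end EdgeOddCyclePartition

section Tutte

variable {V : Type*} [DecidableEq V] {P : SimpleGraph V} [P.LocallyFinite] {R T : Finset V}

lemma card_le_card_nbhd_inter_of_isIndepSet
    (h : ∀ T ⊆ R, P.IsIndepSet (T : Set V) → #T ≤ #(nbhd P T ∩ R)) (hT : T ⊆ R) :
    #T ≤ #(nbhd P T ∩ R) := by
  -- A vertex of `T` with a neighbor in `T` already lies in `N(T) ∩ R`, so only the others need `h`.
  set T₀ := T \ nbhd P T
  have hT₀ : T₀ ⊆ T := sdiff_subset
  have hdisj : Disjoint (nbhd P T₀) T := disjoint_nbhd_left.2 sdiff_disjoint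
  have hindep : P.IsIndepSet (T₀ : Set V) :=
    isIndepSet_iff_disjoint_nbhd.2 (hdisj.mono_right hT₀).symm
  have hsub : nbhd P T₀ ∩ R ∪ T ∩ nbhd P T ⊆ nbhd P T ∩ R :=
    union_subset (inter_subset_inter_right (nbhd_mono hT₀))
      (inter_comm T _ ▸ inter_subset_inter_left hT)
  calc #T = #T₀ + #(T ∩ nbhd P T) := (card_sdiff_add_card_inter T _).symm
    _ ≤ #(nbhd P T₀ ∩ R) + #(T ∩ nbhd P T) := Nat.add_le_add_right (h T₀ (hT₀.trans hT) hindep) _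
    _ = #(nbhd P T₀ ∩ R ∪ T ∩ nbhd P T) :=
      (card_union_of_disjoint (hdisj.mono inter_subset_left inter_subset_left)).symm
    _ ≤ #(nbhd P T ∩ R) := card_le_card hsub

variable [Fintype V]

theorem EdgeOddCyclePartition.exists_of_isIndepSet_card_le
    (h : ∀ T ⊆ R, P.IsIndepSet (T : Set V) → #T ≤ #(nbhd P T ∩ R)) :
    ∃ Q, EdgeOddCyclePartition P R Q := by
  obtain ⟨σ, hfix, hσ⟩ := exists_perm_forall_mem_of_card_le (t := fun v ↦ P.neighborFinset v)
    fun _ ↦ card_le_card_nbhd_inter_of_isIndepSet h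
  simp only [SimpleGraph.mem_neighborFinset] at hσ
  have hsupp : σ.support = R := by
    ext v
    grind [Equiv.Perm.mem_support, SimpleGraph.Adj.ne]
  exact hsupp ▸ exists_support (hsupp ▸ hσ)

theorem EdgeOddCyclePartition.exists_sdiff_of_isIndepSet_card_add_le {X : Finset V}
    (h : ∀ T ⊆ R, P.IsIndepSet (T : Set V) → T.Nonempty → #T + #X ≤ #(nbhd P T ∩ R)) :
    ∃ Q, EdgeOddCyclePartition P (R \ X) Q := by
  refine exists_of_isIndepSet_card_le fun T hT hindep ↦ ?_
  obtain rfl | hne := T.eq_empty_or_nonempty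
  · simp
  have := h T (hT.trans sdiff_subset) hindep hne
  have := le_card_sdiff X (nbhd P T ∩ R)
  rw [← inter_sdiff_assoc]
  lia

end Tutte

/-- With `S` an independent set of non-isolated vertices maximizing
`|S| − |N(S)|`, of maximum cardinality among such maximizers, and
`R = V(P) \ N[S]` having no isolated vertices in `P[R]`: (1) `R` admits a partition into
adjacent pairs and odd blocks carrying Hamiltonian cycles, and (2) so does `R \ {x}`
for every `x ∈ R`. -/
theorem stmt7 {V : Type*} [Fintype V] [DecidableEq V]
    (P : SimpleGraph V) [DecidableRel P.Adj] (S : Finset V)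
    (hInd : ∀ u ∈ S, ∀ v ∈ S, ¬ P.Adj u v)
    (hNonIso : ∀ v ∈ S, ∃ w, P.Adj v w)
    (hMax : ∀ S' : Finset V, (∀ u ∈ S', ∀ v ∈ S', ¬ P.Adj u v) →
      (∀ v ∈ S', ∃ w, P.Adj v w) →
      (S'.card : ℤ) - ((S'.biUnion (fun s => P.neighborFinset s)).card : ℤ) ≤
        (S.card : ℤ) - ((S.biUnion (fun s => P.neighborFinset s)).card : ℤ))
    (hMaxCard : ∀ S' : Finset V, (∀ u ∈ S', ∀ v ∈ S', ¬ P.Adj u v) →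
      (∀ v ∈ S', ∃ w, P.Adj v w) →
      (S'.card : ℤ) - ((S'.biUnion (fun s => P.neighborFinset s)).card : ℤ) =
        (S.card : ℤ) - ((S.biUnion (fun s => P.neighborFinset s)).card : ℤ) →
      S'.card ≤ S.card)
    (R : Finset V)
    (hR : R = Finset.univ \ (S ∪ S.biUnion (fun s => P.neighborFinset s)))
    (hRnoIso : ∀ v ∈ R, ∃ w ∈ R, P.Adj v w) :
    (∃ Part : Finset (Finset V), EdgeOddCyclePartition P R Part) ∧
    (∀ x ∈ R, ∃ Part : Finset (Finset V), EdgeOddCyclePartition P (R \ {x}) Part) := by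
  have hS : IsMaximumCritical P S :=
    ⟨⟨isIndepSet_iff_forall_not_adj.2 hInd, hNonIso⟩,
      fun hT ↦ hMax _ (isIndepSet_iff_forall_not_adj.1 hT.isIndepSet) hT.exists_adj,
      fun hT ↦ hMaxCard _ (isIndepSet_iff_forall_not_adj.1 hT.isIndepSet) hT.exists_adj⟩
  have hsurplus (T : Finset V) (hT : T ⊆ R) (hindep : P.IsIndepSet (T : Set V))
      (hne : T.Nonempty) : #T + 1 ≤ #(nbhd P T ∩ R) := by
    have hadj : ∀ v ∈ T, ∃ w, P.Adj v w := fun v hv ↦ (hRnoIso v (hT hv)).imp fun _ ↦ And.right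
    rw [hR, subset_sdiff] at hT
    rw [hR, ← inter_sdiff_assoc, inter_univ]
    exact hS.card_lt_card_nbhd_sdiff ⟨hindep, hadj⟩ hne hT.2
  have hsdiff (X : Finset V) (hX : #X ≤ 1) : ∃ Q, EdgeOddCyclePartition P (R \ X) Q :=
    EdgeOddCyclePartition.exists_sdiff_of_isIndepSet_card_add_le fun T hT hindep hne ↦
      (Nat.add_le_add_left hX _).trans (hsurplus T hT hindep hne)
  exact ⟨by simpa using hsdiff ∅, fun x _ ↦ hsdiff {x} (card_singleton x).le⟩
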